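/- Let t be a good F-term with variables x₁ : D₁, …, x_k : D_k denoting f = ⟦t⟧ : D₁×⋯×D_k → D, and let N be the number of occurrences of constants c_g in t. Then for every (a₁,…,a_k) ∈ D₁×⋯×D_k, the term t[⌜a₁⌝/x₁, …, ⌜a_k⌝/x_k] reduces to ⌜f(a₁,…,a_k)⌝ using F-reductions only, and under the leftmost reduction strategy this reduction consists of exactly L_t F-reductions, where L_t depends only on t (not on a₁,…,a_k) and equals N. -/

import Mathlib

/-!
Every node of a good term is a spine `c_f M₁ ⋯ M_n` with `n` the arity of `f`. The leftmost
strategy evaluates such a spine by evaluating `M₁, …, M_n` from left to right and then contracting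
the root, so that by induction on the term each constant is contracted exactly once.

Two facts show that this is indeed the leftmost strategy. Encodings contain no constant, whereas
every `F`-redex does; so an argument that can still be reduced is not an encoding, and neither the
whole spine nor any prefix of it reaching that argument is an `F`-redex (`not_isFRedex_apps`).
A spine headed by `c_f` determines `f` and the list of its arguments (`apps_const_inj`); so a spine
with fewer than `arity f` constant-free arguments contains no `F`-redex (`not_hasF_apps`), and the
part of the spine to the left of the argument being evaluated offers no competing redex.
The reduction by `F`-steps alone is then read off the leftmost one, which makes no β-step.
-/

/-- The two datatypes: natural numbers and Booleans. -/
inductive Dt : Type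
  | nat
  | bool
  deriving DecidableEq

def Dt.carrier : Dt → Type
  | .nat => ℕ
  | .bool => Bool

instance Dt.decEqCarrier : (D : Dt) → DecidableEq D.carrier
  | .nat => inferInstanceAs (DecidableEq ℕ)
  | .bool => inferInstanceAs (DecidableEq Bool)

/-- A family `F` of typed functions over the datatypes. -/
structure Sig where
  Sym : Type
  arity : Sym → ℕ
  dom : (f : Sym) → Fin (arity f) → Dt
  cod : Sym → Dt
  interp : (f : Sym) → ((i : Fin (arity f)) → (dom f i).carrier) → (cod f).carrier

/-- Terms of the `Λ_F`-calculus (de Bruijn representation, so α-equivalence is equality). -/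
inductive LamF (S : Sig) : Type
  | var : ℕ → LamF S
  | const : S.Sym → LamF S
  | app : LamF S → LamF S → LamF S
  | lam : LamF S → LamF S

namespace LamF

variable {S : Sig}

def lift (d : ℕ) : LamF S → LamF S
  | var n => if n < d then var n else var (n + 1)
  | const c => const c
  | app M N => app (lift d M) (lift d N)
  | lam M => lam (lift (d + 1) M)

def subst : LamF S → ℕ → LamF S → LamF S
  | var n, k, N => if n = k then N else if k < n then var (n - 1) else var n
  | const c, _, _ => const c
  | app A B, k, N => app (subst A k N) (subst B k N)
  | lam A, k, N => lam (subst A (k + 1) (lift 0 N))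

def apps : LamF S → List (LamF S) → LamF S := List.foldl app

def Ktrue : LamF S := lam (lam (var 1))
def Kfalse : LamF S := lam (lam (var 0))

def num : ℕ → LamF S
  | 0 => lam (app (app (var 0) Ktrue) Kfalse)
  | n + 1 => lam (app (app (var 0) Kfalse) (num n))

/-- Encoding of an element of a datatype as a `Λ_F`-term. -/
def enc : (D : Dt) → D.carrier → LamF S
  | .nat, n => num n
  | .bool, b => cond b Ktrue Kfalse

/-- One-step β-reduction. -/
inductive BStep : LamF S → LamF S → Prop
  | beta (M N : LamF S) : BStep (app (lam M) N) (subst M 0 N)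
  | appL {M M' : LamF S} (N : LamF S) : BStep M M' → BStep (app M N) (app M' N)
  | appR (M : LamF S) {N N' : LamF S} : BStep N N' → BStep (app M N) (app M N')
  | abs {M M' : LamF S} : BStep M M' → BStep (lam M) (lam M')

/-- The `F`-axioms: `c_f ⌜a₁⌝ ⋯ ⌜a_k⌝ → ⌜f(a₁,…,a_k)⌝` (root redexes). -/
inductive FAx : LamF S → LamF S → Prop
  | intro (f : S.Sym) (a : (i : Fin (S.arity f)) → (S.dom f i).carrier) :
      FAx (apps (const f) (List.ofFn fun i => enc (S.dom f i) (a i)))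
          (enc (S.cod f) (S.interp f a))

/-- One-step `F`-reduction: contextual closure of the `F`-axioms. -/
inductive FStep : LamF S → LamF S → Prop
  | ax {M N : LamF S} : FAx M N → FStep M N
  | appL {M M' : LamF S} (N : LamF S) : FStep M M' → FStep (app M N) (app M' N)
  | appR (M : LamF S) {N N' : LamF S} : FStep N N' → FStep (app M N) (app M N')
  | abs {M M' : LamF S} : FStep M M' → FStep (lam M) (lam M')

def BStar : LamF S → LamF S → Prop := Relation.ReflTransGen BStep
def FStar : LamF S → LamF S → Prop := Relation.ReflTransGen FStep

/-- One-step reduction of the `Λ_F`-calculus: β or F. -/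
def Step (M N : LamF S) : Prop := BStep M N ∨ FStep M N

def Star : LamF S → LamF S → Prop := Relation.ReflTransGen Step

/-- `M` is an `F`-redex. -/
def IsFRedex (M : LamF S) : Prop := ∃ N, FAx M N

/-- `M` contains an `F`-redex (equivalently: some `F`-step applies to `M`). -/
def HasF (M : LamF S) : Prop := ∃ N, FStep M N

def size : LamF S → ℕ
  | var _ => 1
  | const _ => 1
  | app A B => size A + size B + 1
  | lam A => size A + 1
def IsAbs : LamF S → Prop
  | lam _ => True
  | _ => False

/-- `M` is β-normal. -/
def BNormal (M : LamF S) : Prop := ∀ N, ¬ BStep M N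

/-- Contraction of the leftmost `F`-redex. -/
inductive LFStep : LamF S → LamF S → Prop
  | ax {M N : LamF S} : FAx M N → LFStep M N
  | abs {A A' : LamF S} : LFStep A A' → LFStep (lam A) (lam A')
  | appL {A A' : LamF S} (B : LamF S) :
      ¬ IsFRedex (app A B) → LFStep A A' → LFStep (app A B) (app A' B)
  | appR (A : LamF S) {B B' : LamF S} :
      ¬ IsFRedex (app A B) → ¬ HasF A → LFStep B B' → LFStep (app A B) (app A B')

/-- Contraction of the leftmost β-redex. -/
inductive LBStep : LamF S → LamF S → Prop
  | beta (A B : LamF S) : LBStep (app (lam A) B) (subst A 0 B)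
  | abs {A A' : LamF S} : LBStep A A' → LBStep (lam A) (lam A')
  | appL {A A' : LamF S} (B : LamF S) : ¬ IsAbs A → LBStep A A' → LBStep (app A B) (app A' B)
  | appR (A : LamF S) {B B' : LamF S} :
      ¬ IsAbs A → BNormal A → LBStep B B' → LBStep (app A B) (app A B')

/-- `LSeq M b f N`: the leftmost reduction strategy of `Λ_F` (leftmost `F`-redex if any,
otherwise leftmost β-redex) takes `M` to `N` using exactly `b` β-reductions and
`f` `F`-reductions. -/
inductive LSeq : LamF S → ℕ → ℕ → LamF S → Prop
  | refl (M : LamF S) : LSeq M 0 0 M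
  | fstep {M P N : LamF S} {b f : ℕ} : LFStep M P → LSeq P b f N → LSeq M b (f + 1) N
  | bstep {M P N : LamF S} {b f : ℕ} : ¬ HasF M → LBStep M P → LSeq P b f N → LSeq M (b + 1) f N
end LamF

/-- Good `F`-terms with variables `x₁ : Γ 0, …, x_k : Γ (k-1)`, of type `D`:
abstraction-free, each constant fully applied, type-correctly. -/
inductive Good (S : Sig) (k : ℕ) (Γ : Fin k → Dt) : Dt → Type
  | var (i : Fin k) : Good S k Γ (Γ i)
  | node (f : S.Sym) (args : (i : Fin (S.arity f)) → Good S k Γ (S.dom f i)) :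
      Good S k Γ (S.cod f)

namespace Good

variable {S : Sig} {k : ℕ} {Γ : Fin k → Dt}

/-- The function denoted by a good `F`-term (composition of the functions of `F`). -/
def eval : {D : Dt} → Good S k Γ D → ((i : Fin k) → (Γ i).carrier) → D.carrier
  | _, .var i, a => a i
  | _, .node f args, a => S.interp f fun i => (args i).eval a

/-- `t[⌜a₁⌝/x₁, …, ⌜a_k⌝/x_k]` : the closed `Λ_F`-term obtained by substituting the
encodings of the `a i` for the variables of `t`. -/
def substEnc : {D : Dt} → Good S k Γ D → ((i : Fin k) → (Γ i).carrier) → LamF S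
  | _, .var i, a => LamF.enc (Γ i) (a i)
  | _, .node f args, a => LamF.apps (.const f) (List.ofFn fun i => (args i).substEnc a)

/-- Number of occurrences of constants `c_f` in a good `F`-term. -/
def nconsts : {D : Dt} → Good S k Γ D → ℕ
  | _, .var _ => 0
  | _, .node _ args => 1 + ∑ i, (args i).nconsts

end Good

/-! ### Constant-free terms and spines -/

namespace LamF

variable {S : Sig}

/-- No constant `c_f` occurs in the term. -/
def ConstFree : LamF S → Prop
  | var _ => True
  | const _ => False
  | app A B => ConstFree A ∧ ConstFree B
  | lam A => ConstFree A

theorem constFree_enc (D : Dt) (x : D.carrier) : ConstFree (enc D x : LamF S) := by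
  cases D with
  | nat =>
    change ConstFree (num x)
    induction (x : ℕ) with
    | zero => simp [num, Ktrue, Kfalse, ConstFree]
    | succ n ih => simpa [num, Kfalse, ConstFree] using ih
  | bool => cases x <;> simp [enc, Ktrue, Kfalse, ConstFree]

theorem apps_append_singleton (M : LamF S) (l : List (LamF S)) (x : LamF S) :
    apps M (l ++ [x]) = app (apps M l) x := by
  simp [apps]

theorem not_constFree_apps (f : S.Sym) (l : List (LamF S)) : ¬ ConstFree (apps (const f) l) := by
  induction l using List.reverseRecOn with
  | nil => exact id
  | append_singleton l x ih =>
    rw [apps_append_singleton]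
    exact fun h => ih h.1

theorem apps_const_inj {f g : S.Sym} {l l' : List (LamF S)}
    (h : apps (const f) l = apps (const g) l') : f = g ∧ l = l' := by
  induction l using List.reverseRecOn generalizing l' with
  | nil =>
    cases l' using List.reverseRecOn with
    | nil => exact ⟨by simpa [apps] using h, rfl⟩
    | append_singleton l' y => simp [apps] at h
  | append_singleton l x ih =>
    cases l' using List.reverseRecOn with
    | nil => simp [apps] at h
    | append_singleton l' y =>
      rw [apps_append_singleton, apps_append_singleton] at h
      injection h with h₁ h₂
      obtain ⟨rfl, rfl⟩ := ih h₁
      exact ⟨rfl, by rw [h₂]⟩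

/-- In a root `F`-redex `c_f l` the list `l` has exactly `arity f` entries, all constant-free. -/
theorem isFRedex_apps {f : S.Sym} {l : List (LamF S)} (h : IsFRedex (apps (const f) l)) :
    l.length = S.arity f ∧ ∀ x ∈ l, ConstFree x := by
  obtain ⟨N, h⟩ := h
  generalize hM : apps (const f) l = M at h
  cases h with
  | intro g a =>
    obtain ⟨rfl, rfl⟩ := apps_const_inj hM
    refine ⟨by simp, fun x hx => ?_⟩
    obtain ⟨i, rfl⟩ := (List.mem_ofFn' _ _).1 hx
    exact constFree_enc _ _

theorem FStep.not_constFree {M N : LamF S} (h : FStep M N) : ¬ ConstFree M := by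
  induction h with
  | ax h =>
    cases h with
    | intro f a => exact not_constFree_apps _ _
  | appL _ _ ih => exact fun h => ih h.1
  | appR _ _ ih => exact fun h => ih h.2
  | abs _ ih => exact ih

theorem LFStep.fstep {M N : LamF S} (h : LFStep M N) : FStep M N := by
  induction h with
  | ax h => exact .ax h
  | abs _ ih => exact .abs ih
  | appL _ _ _ ih => exact .appL _ ih
  | appR _ _ _ _ ih => exact .appR _ ih

theorem not_isFRedex_apps {f : S.Sym} {l : List (LamF S)} {M : LamF S} (hM : M ∈ l)
    (h : ¬ ConstFree M) : ¬ IsFRedex (apps (const f) l) :=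
  fun hr => h ((isFRedex_apps hr).2 M hM)

/-- A spine `c_f l` that is too short to be a redex and has constant-free arguments contains no
`F`-redex at all. -/
theorem not_hasF_apps {f : S.Sym} {l : List (LamF S)} (hl : ∀ x ∈ l, ConstFree x)
    (hlen : l.length < S.arity f) : ¬ HasF (apps (const f) l) := by
  induction l using List.reverseRecOn with
  | nil =>
    rintro ⟨N, h⟩
    generalize hM : apps (const f) [] = M at h
    cases h with
    | ax h =>
      subst hM
      exact hlen.ne (isFRedex_apps ⟨_, h⟩).1
    | _ => simp [apps] at hM
  | append_singleton l x ih =>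
    rintro ⟨N, h⟩
    generalize hM : apps (const f) (l ++ [x]) = M at h
    cases h with
    | ax h =>
      subst hM
      exact hlen.ne (isFRedex_apps ⟨_, h⟩).1
    | appL _ h =>
      rw [apps_append_singleton] at hM
      injection hM with h₁ h₂
      subst h₁
      refine ih (fun y hy => hl y (by simp [hy])) ?_ ⟨_, h⟩
      simp at hlen
      omega
    | appR _ h =>
      rw [apps_append_singleton] at hM
      injection hM with h₁ h₂
      subst h₂
      exact h.not_constFree (hl x (by simp))
    | abs _ =>
      rw [apps_append_singleton] at hM
      cases hM

/-! ### Leftmost evaluation of a spine -/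

/-- A leftmost step in an argument all of whose predecessors are constant-free is a leftmost step
of the whole spine. -/
theorem LFStep.arg {f : S.Sym} {l : List (LamF S)} (hl : ∀ x ∈ l, ConstFree x)
    (hlen : l.length < S.arity f) {M M' : LamF S} (h : LFStep M M') (r : List (LamF S)) :
    LFStep (apps (const f) (l ++ M :: r)) (apps (const f) (l ++ M' :: r)) := by
  have hM := h.fstep.not_constFree
  induction r using List.reverseRecOn with
  | nil =>
    have hr : ¬ IsFRedex (apps (const f) (l ++ [M])) := not_isFRedex_apps (by simp) hM
    rw [apps_append_singleton] at hr ⊢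
    rw [apps_append_singleton]
    exact .appR _ hr (not_hasF_apps hl hlen) h
  | append_singleton r x ih =>
    have hr : ¬ IsFRedex (apps (const f) ((l ++ M :: r) ++ [x])) :=
      not_isFRedex_apps (by simp) hM
    rw [apps_append_singleton] at hr
    rw [← List.cons_append, ← List.append_assoc, apps_append_singleton,
      ← List.cons_append, ← List.append_assoc, apps_append_singleton]
    exact .appL _ hr ih

theorem LSeq.trans {M P N : LamF S} {b f b' f' : ℕ} (h : LSeq M b f P) (h' : LSeq P b' f' N) :
    LSeq M (b + b') (f + f') N := by
  induction h with
  | refl => simpa using h'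
  | fstep hs _ ih =>
    rw [Nat.add_right_comm]
    exact .fstep hs (ih h')
  | bstep hn hs _ ih =>
    rw [Nat.add_right_comm]
    exact .bstep hn hs (ih h')

theorem LSeq.arg {f : S.Sym} {l : List (LamF S)} (hl : ∀ x ∈ l, ConstFree x)
    (hlen : l.length < S.arity f) {M V : LamF S} {n : ℕ} (h : LSeq M 0 n V)
    (r : List (LamF S)) :
    LSeq (apps (const f) (l ++ M :: r)) 0 n (apps (const f) (l ++ V :: r)) := by
  generalize hb : 0 = b at h
  induction h with
  | refl => exact .refl _
  | fstep hs _ ih => exact .fstep (hs.arg hl hlen r) (ih hb)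
  | bstep => omega

theorem LSeq.fstar {M N : LamF S} {n : ℕ} (h : LSeq M 0 n N) : FStar M N := by
  generalize hb : 0 = b at h
  induction h with
  | refl => exact .refl
  | fstep hs _ ih => exact .head hs.fstep (ih hb)
  | bstep => omega

/-- The leftmost strategy evaluates the arguments of a spine from left to right. A triple
`(M, n, V)` in `L` stands for an argument `M` whose leftmost reduction reaches the constant-free
term `V` in `n` steps; `l` lists the arguments that are already evaluated. -/
theorem LSeq.args {f : S.Sym} (L : List (LamF S × ℕ × LamF S))
    (hL : ∀ p ∈ L, LSeq p.1 0 p.2.1 p.2.2 ∧ ConstFree p.2.2)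
    (l : List (LamF S)) (hl : ∀ x ∈ l, ConstFree x) (hlen : l.length + L.length ≤ S.arity f) :
    LSeq (apps (const f) (l ++ L.map (·.1))) 0 (L.map (·.2.1)).sum
      (apps (const f) (l ++ L.map (·.2.2))) := by
  induction L generalizing l with
  | nil => exact .refl _
  | cons p L ih =>
    obtain ⟨hp, hV⟩ := hL p (by simp)
    simp only [List.length_cons] at hlen
    have h₁ := hp.arg hl (f := f) (by omega) (L.map (·.1))
    have h₂ := ih (fun q hq => hL q (by simp [hq])) (l ++ [p.2.2])
      (by
        intro x hx
        rcases List.mem_append.1 hx with hx | hx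
        · exact hl x hx
        · rw [List.mem_singleton.1 hx]
          exact hV)
      (by simp only [List.length_append, List.length_singleton]; omega)
    simp only [List.append_assoc, List.singleton_append] at h₂
    simpa using h₁.trans h₂

end LamF

theorem Good.lseq_substEnc {S : Sig} {k : ℕ} {Γ : Fin k → Dt} {D : Dt} (t : Good S k Γ D)
    (a : (i : Fin k) → (Γ i).carrier) :
    LamF.LSeq (t.substEnc a) 0 t.nconsts (LamF.enc D (t.eval a)) := by
  induction t with
  | var i => exact .refl _
  | node f args ih =>
    have h := LamF.LSeq.args (f := f)
      (List.ofFn fun i => ((args i).substEnc a, (args i).nconsts,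
        (LamF.enc (S.dom f i) ((args i).eval a) : LamF S)))
      (by
        intro p hp
        obtain ⟨i, rfl⟩ := (List.mem_ofFn' _ _).1 hp
        exact ⟨ih i, LamF.constFree_enc _ _⟩)
      [] (by simp) (by simp)
    simp only [List.nil_append, List.map_ofFn, Function.comp_def, List.sum_ofFn] at h
    have h' := h.trans (.fstep (.ax (.intro f fun i => (args i).eval a)) (.refl _))
    simp only [Good.substEnc, Good.nconsts, Good.eval]
    rw [Nat.add_comm 1]
    exact h'

/-- A good F-term `t` with its variables substituted by encodings reduces, by
F-reductions only, to the encoding of `⟦t⟧(a)`; under the leftmost reduction strategy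
this takes exactly `L_t` F-reductions (and no β-reduction), where `L_t` is the number
of occurrences of constants in `t` — independent of `a`. -/
theorem good_term_evaluation (S : Sig) (k : ℕ) (Γ : Fin k → Dt) (D : Dt)
    (t : Good S k Γ D) (a : (i : Fin k) → (Γ i).carrier) :
    LamF.FStar (t.substEnc a) (LamF.enc D (t.eval a)) ∧
    LamF.LSeq (t.substEnc a) 0 t.nconsts (LamF.enc D (t.eval a)) := by
  exact ⟨(t.lseq_substEnc a).fstar, t.lseq_substEnc a⟩
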